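/- Let n ≥ 1 and let (f_t)_{t∈[0,1]} be a smooth path of diffeomorphisms of ℝ^{2n+1} consisting of contactomorphisms of the standard contact structure, i.e. there is a smooth function ρ : [0,1] × ℝ^{2n+1} → ℝ with ρ > 0 such that α₀(f(t,p))(D_p f_t (v)) = ρ(t,p) · α₀(p)(v) for all t, p and all v ∈ ℝ^{2n+1}, where D_p f_t is the derivative of f_t at p. Suppose there is a compact set K₁ ⊂ ℝ^{2n+1} such that the path is positive outside K₁: α₀(f(t,q))(∂_t f(t,q)) > 0 for all t ∈ [0,1] and all q with f(t,q) ∉ K₁. Then there exist a compact set K₂ ⊇ K₁ and a positive smooth path of diffeomorphisms (g_t)_{t∈[0,1]} with g_0 = f_0, g_1 = f_1, and g(t,q) = f(t,q) for all t ∈ [0,1] and all q ∉ K₂. -/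

import Mathlib

open Set Function

noncomputable section

/-- `ℝ^{2n+1}` with coordinates `(x, y, z) ∈ ℝⁿ × ℝⁿ × ℝ`. -/
abbrev E (n : ℕ) : Type := (Fin n → ℝ) × (Fin n → ℝ) × ℝ

/-- The standard contact form `α₀ = dz + ∑ xᵢ dyᵢ`: at the point `p = (x,y,z)` it sends the
vector `v = (u,w,c)` to `c + ∑ xᵢ wᵢ`. -/
def α₀ (n : ℕ) (p v : E n) : ℝ := v.2.2 + ∑ i, p.1 i * v.2.1 i

/-- A diffeomorphism of `ℝ^{2n+1}`: a smooth bijection with smooth inverse. -/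
def IsDiffeo (n : ℕ) (f : E n → E n) : Prop :=
  ContDiff ℝ (⊤ : ℕ∞) f ∧ ∃ g : E n → E n, ContDiff ℝ (⊤ : ℕ∞) g ∧ LeftInverse g f ∧ RightInverse g f

/-- A smooth path of diffeomorphisms, parametrized by `t ∈ [0,1]` (smoothly extended to `ℝ`):
a smooth map such that `g_t := g(t,·)` is a diffeomorphism for every `t ∈ [0,1]`. -/
def IsSmoothPath (n : ℕ) (g : ℝ × E n → E n) : Prop :=
  ContDiff ℝ (⊤ : ℕ∞) g ∧ ∀ t ∈ Icc (0:ℝ) 1, IsDiffeo n (fun p => g (t, p))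

/-- The time derivative `∂ₜ g(t,q)` of a path. -/
def pathDeriv (n : ℕ) (g : ℝ × E n → E n) (t : ℝ) (q : E n) : E n :=
  deriv (fun s => g (s, q)) t

/-- A path is positive if `α₀(g(t,q))(∂ₜ g(t,q)) > 0` for all `t ∈ [0,1]` and all `q`. -/
def IsPositivePath (n : ℕ) (g : ℝ × E n → E n) : Prop :=
  ∀ t ∈ Icc (0:ℝ) 1, ∀ q, 0 < α₀ n (g (t, q)) (pathDeriv n g t q)

/-- A path is null if `α₀(g(t,q))(∂ₜ g(t,q)) = 0` for all `t ∈ [0,1]` and all `q`. -/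
def IsNullPath (n : ℕ) (g : ℝ × E n → E n) : Prop :=
  ∀ t ∈ Icc (0:ℝ) 1, ∀ q, α₀ n (g (t, q)) (pathDeriv n g t q) = 0

/-- A path is compactly supported if all `g(t,·)` are the identity outside a fixed compact set. -/
def IsCompactlySupportedPath (n : ℕ) (g : ℝ × E n → E n) : Prop :=
  ∃ K : Set (E n), IsCompact K ∧ ∀ t ∈ Icc (0:ℝ) 1, ∀ p ∉ K, g (t, p) = p

/-- `f` is connected to the identity by a smooth path of diffeomorphisms. -/
def ConnToId (n : ℕ) (f : E n → E n) : Prop :=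
  ∃ g : ℝ × E n → E n, IsSmoothPath n g ∧ (∀ p, g (0, p) = p) ∧ (∀ p, g (1, p) = f p)

/-- `f` is connected to the identity by a compactly supported smooth path of diffeomorphisms. -/
def ConnToIdCompactlySupported (n : ℕ) (f : E n → E n) : Prop :=
  ∃ g : ℝ × E n → E n, IsSmoothPath n g ∧ IsCompactlySupportedPath n g ∧
    (∀ p, g (0, p) = p) ∧ (∀ p, g (1, p) = f p)

/-!
The path `f` is precomposed with a loop `φ` of compactly supported diffeomorphisms based at the
identity. As each `f_t` is contact, the `α₀`-speed of `f_t ∘ φ_t` at `q` is the speed of `f` at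
`φ_t q` plus `ρ` times the speed of `φ` at `q`. So it suffices that `φ` has nonnegative speed, and
speed as large as we like over a given compact set.

Such loops exist because `α₀` is left-invariant under the Heisenberg group law `*` and is
multiplied by `s²` under the Heisenberg dilation `δ_s`: if `γ` is a closed curve through `0` with
`α₀(γ') > 0` and `r` is a cutoff function, then `φ_t q = q * δ_{r q} (γ t)` has speed
`(r q)² α₀(γ' t) ≥ 0`. For `r` small, `φ_t` is a small perturbation of the identity, hence a
diffeomorphism; the speed lost in this way is regained by running through the loop many times.
-/

open scoped Topology NNReal

section Calculus

variable {X V W : Type*} [NormedAddCommGroup X] [NormedSpace ℝ X]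
  [NormedAddCommGroup V] [NormedSpace ℝ V] [NormedAddCommGroup W] [NormedSpace ℝ W]

lemma hasFDerivAt_partial_right {f : X × V → W} {x : X} {v : V}
    (hf : DifferentiableAt ℝ f (x, v)) :
    HasFDerivAt (fun q => f (x, q)) (fderiv ℝ f (x, v) ∘L .inr ℝ X V) v :=
  hf.hasFDerivAt.comp v (hasFDerivAt_prodMk_right x v)

lemma deriv_along_curve {f : ℝ × V → W} {c : ℝ → V} {t : ℝ}
    (hf : DifferentiableAt ℝ f (t, c t)) (hc : DifferentiableAt ℝ c t) :
    deriv (fun s => f (s, c s)) t =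
      deriv (fun s => f (s, c t)) t + fderiv ℝ (fun q => f (t, q)) (c t) (deriv c t) := by
  have hgraph : HasDerivAt (fun s => f (s, c s)) (fderiv ℝ f (t, c t) (1, deriv c t)) t :=
    hf.hasFDerivAt.comp_hasDerivAt t ((hasDerivAt_id t).prodMk hc.hasDerivAt)
  have hslice : HasDerivAt (fun s => f (s, c t)) (fderiv ℝ f (t, c t) (1, 0)) t :=
    hf.hasFDerivAt.comp_hasDerivAt t ((hasDerivAt_id t).prodMk (hasDerivAt_const t (c t)))
  rw [hgraph.deriv, hslice.deriv, (hasFDerivAt_partial_right hf).fderiv]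
  simp [← map_add]

theorem exists_contDiff_inverse_id_add [CompleteSpace V] {k : WithTop ℕ∞} {w : V → V} {c : ℝ≥0}
    (hw : ContDiff ℝ k w) (hk : k ≠ 0) (hlip : LipschitzWith c w) (hc : c < 1) :
    ∃ g : V → V, ContDiff ℝ k g ∧
      LeftInverse g (fun q => q + w q) ∧ RightInverse g (fun q => q + w q) := by
  have happrox : ApproximatesLinearOn (fun q => q + w q)
      (ContinuousLinearEquiv.refl ℝ V : V →L[ℝ] V) univ c := by
    intro p _ q _
    change ‖p + w p - (q + w q) - (p - q)‖ ≤ c * ‖p - q‖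
    rw [add_sub_add_comm, add_sub_cancel_left, ← dist_eq_norm, ← dist_eq_norm]
    exact hlip.dist_le_mul p q
  have hsmall : Subsingleton V ∨
      c < ‖((ContinuousLinearEquiv.refl ℝ V).symm : V →L[ℝ] V)‖₊⁻¹ := by
    rcases subsingleton_or_nontrivial V with hV | hV
    · exact .inl hV
    · exact .inr (by simpa using hc)
  let H := happrox.toHomeomorph _ hsmall
  refine ⟨H.symm, contDiff_iff_contDiffAt.2 fun a => ?_, H.symm_apply_apply, H.apply_symm_apply⟩
  set p := H.symm a
  have hnorm : ‖-fderiv ℝ w p‖ < 1 := by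
    rw [norm_neg]
    exact (norm_fderiv_le_of_lipschitz ℝ hlip).trans_lt hc
  let e := ContinuousLinearEquiv.unitsEquiv ℝ V (Units.oneSub _ hnorm)
  have he : (e : V →L[ℝ] V) = .id ℝ V + fderiv ℝ w p := by
    ext v
    simp [e, Units.oneSub]
  have hH : HasFDerivAt (fun q => q + w q) (e : V →L[ℝ] V) p := by
    rw [he]
    exact (hasFDerivAt_id p).add (hw.differentiable hk p).hasFDerivAt
  exact H.toOpenPartialHomeomorph.contDiffAt_symm (mem_univ a) hH (contDiff_id.add hw).contDiffAt

lemma isInvertible_fderiv_of_inverse {f : V → W} {g : W → V} {v : V}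
    (hf : DifferentiableAt ℝ f v) (hg : DifferentiableAt ℝ g (f v)) (hl : LeftInverse g f)
    (hr : RightInverse g f) : (fderiv ℝ f v).IsInvertible := by
  have hf' : HasFDerivAt f (fderiv ℝ f v) (g (f v)) := (hl v).symm ▸ hf.hasFDerivAt
  have hgf := hg.hasFDerivAt.comp v hf.hasFDerivAt
  have hfg := hf'.comp (f v) hg.hasFDerivAt
  rw [hl.comp_eq_id] at hgf
  rw [hr.comp_eq_id] at hfg
  exact .of_inverse (hfg.unique (hasFDerivAt_id _)) (hgf.unique (hasFDerivAt_id _))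

theorem continuousOn_inverse_of_contDiff [CompleteSpace X] [CompleteSpace V] [CompleteSpace W]
    {f : X × V → W} {g : X × W → V} {S : Set X} (hf : ContDiff ℝ 1 f)
    (hg : ∀ x ∈ S, Differentiable ℝ (fun y => g (x, y)))
    (hl : ∀ x ∈ S, LeftInverse (fun y => g (x, y)) (fun v => f (x, v)))
    (hr : ∀ x ∈ S, RightInverse (fun y => g (x, y)) (fun v => f (x, v))) :
    ContinuousOn g (S ×ˢ univ) := by
  rintro ⟨x, y⟩ ⟨hx, -⟩
  set p := g (x, y)
  let F : (X × W) × V → W := fun z => f (z.1.1, z.2) - z.1.2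
  have hF : ContDiff ℝ 1 F := by fun_prop
  have hF' : HasStrictFDerivAt F (fderiv ℝ F ((x, y), p)) ((x, y), p) :=
    hF.contDiffAt.hasStrictFDerivAt one_ne_zero
  have hinv : (fderiv ℝ F ((x, y), p) ∘L .inr ℝ (X × W) V).IsInvertible := by
    have hslice : HasFDerivAt (fun v => f (x, v) - y) _ p :=
      hasFDerivAt_partial_right (hF.differentiable one_ne_zero ((x, y), p))
    rw [← hslice.fderiv, fderiv_sub_const]
    have hfx : ContDiff ℝ 1 (fun v => f (x, v)) := by fun_prop
    exact isInvertible_fderiv_of_inverse (hfx.differentiable one_ne_zero p) (hg x hx _) (hl x hx)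
      (hr x hx)
  set ψ := hF'.implicitFunctionOfProdDomain hinv
  have hψ : ∀ᶠ z in 𝓝 (x, y), f (z.1, ψ z) = z.2 := by
    filter_upwards [hF'.eventually_apply_implicitFunctionOfProdDomain hinv] with z hz
    have hp : f (x, p) = y := hr x hx y
    simpa [F, hp, sub_eq_zero] using hz
  have hgψ : ψ =ᶠ[𝓝[S ×ˢ univ] (x, y)] g := by
    filter_upwards [nhdsWithin_le_nhds hψ, self_mem_nhdsWithin] with z hz hzS
    have hleft : g (z.1, f (z.1, ψ z)) = ψ z := hl z.1 hzS.1 (ψ z)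
    rw [← hleft, hz]
  exact ((hF'.tendsto_implicitFunctionOfProdDomain hinv).mono_left nhdsWithin_le_nhds).congr' hgψ

lemma eventually_forall_norm_lt {X V W : Type*} [TopologicalSpace X] [TopologicalSpace V]
    [SeminormedAddCommGroup W] {F : X × V → W} {K : Set V} {x₀ : X} {δ : ℝ} (hF : Continuous F)
    (hK : IsCompact K) (hsupp : ∀ x, ∀ v ∉ K, F (x, v) = 0) (h0 : ∀ v, F (x₀, v) = 0)
    (hδ : 0 < δ) :
    ∀ᶠ x in 𝓝 x₀, ∀ v, ‖F (x, v)‖ < δ := by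
  have hnear : ∀ᶠ x in 𝓝 x₀, ∀ v ∈ K, ‖F (x, v)‖ < δ :=
    hK.eventually_forall_of_forall_eventually fun v _ =>
      hF.norm.continuousAt.eventually_lt_const (by simpa [h0] using hδ)
  filter_upwards [hnear] with x hx v
  by_cases hv : v ∈ K
  · exact hx v hv
  · simpa [hsupp x v hv] using hδ

lemma eventually_lipschitzWith {F : X × V → W} {K : Set V} {x₀ : X} {δ : ℝ≥0}
    (hF : ContDiff ℝ 1 F) (hK : IsCompact K) (hsupp : ∀ x, ∀ v ∉ K, F (x, v) = 0)
    (h0 : ∀ v, F (x₀, v) = 0) (hδ : 0 < δ) :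
    ∀ᶠ x in 𝓝 x₀, LipschitzWith δ (fun v => F (x, v)) := by
  have hderiv : Continuous fun z : X × V => fderiv ℝ (fun v => F (z.1, v)) z.2 := by
    refine (ContDiff.fderiv (n := 0) (m := 1) ?_ contDiff_snd (by simp)).continuous
    change ContDiff ℝ 1 fun z : (X × V) × V => F (z.1.1, z.2)
    fun_prop
  have hderiv_supp : ∀ x, ∀ v ∉ K, fderiv ℝ (fun v => F (x, v)) v = 0 := by
    intro x v hv
    have hzero : (fun v => F (x, v)) =ᶠ[𝓝 v] fun _ => 0 := by
      filter_upwards [hK.isClosed.isOpen_compl.mem_nhds hv] with u hu using hsupp x u hu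
    rw [hzero.fderiv_eq, fderiv_const_apply]
  filter_upwards [eventually_forall_norm_lt hderiv hK hderiv_supp (x₀ := x₀) (by simp [h0]) hδ]
    with x hx
  have hFx : ContDiff ℝ 1 (fun v => F (x, v)) := by fun_prop
  exact lipschitzWith_of_nnnorm_fderiv_le (hFx.differentiable one_ne_zero) fun v => (hx v).le

end Calculus

lemma exists_forall_ge_pos_add_mul {X : Type*} [TopologicalSpace X] {S : Set X} {a b : X → ℝ}
    (hS : IsCompact S) (ha : ContinuousOn a S) (hb : ContinuousOn b S) (hbpos : ∀ x ∈ S, 0 < b x) :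
    ∃ C : ℝ, ∀ x ∈ S, ∀ c ≥ C, 0 < a x + b x * c := by
  obtain ⟨M, hM⟩ := hS.exists_bound_of_continuousOn (ha.div hb fun x hx => (hbpos x hx).ne')
  refine ⟨M + 1, fun x hx c hc => ?_⟩
  have hquot : -M ≤ a x / b x := (abs_le.1 (hM x hx)).1
  have hsum : 0 < a x / b x + c := by linarith
  have hmul := mul_pos (hbpos x hx) hsum
  rwa [mul_add, mul_div_cancel₀ _ (hbpos x hx).ne'] at hmul

variable {n : ℕ}

namespace IsSmoothPath

variable {f φ : ℝ × E n → E n}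

lemma comp (hf : IsSmoothPath n f) (hφ : IsSmoothPath n φ) :
    IsSmoothPath n (fun z => f (z.1, φ z)) := by
  refine ⟨hf.1.comp (contDiff_fst.prodMk hφ.1), fun t ht => ?_⟩
  obtain ⟨hft, f', hf', hfl, hfr⟩ := hf.2 t ht
  obtain ⟨hφt, φ', hφ', hφl, hφr⟩ := hφ.2 t ht
  exact ⟨hft.comp hφt, φ' ∘ f', hφ'.comp hf', hfl.comp hφl, hfr.comp hφr⟩

theorem exists_continuousOn_inverse (hf : IsSmoothPath n f) :
    ∃ g : ℝ × E n → E n, ContinuousOn g (Icc 0 1 ×ˢ univ) ∧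
      ∀ t ∈ Icc (0 : ℝ) 1, ∀ q, g (t, f (t, q)) = q := by
  choose! g hg hl hr using fun t ht => (hf.2 t ht).2
  exact ⟨fun z => g z.1 z.2, continuousOn_inverse_of_contDiff (hf.1.of_le (by simp))
    (fun t ht => (hg t ht).differentiable (by simp)) hl hr, hl⟩

lemma exists_isCompact_preimage (hf : IsSmoothPath n f) {K : Set (E n)} (hK : IsCompact K) :
    ∃ L : Set (E n), IsCompact L ∧ ∀ t ∈ Icc (0 : ℝ) 1, ∀ q, f (t, q) ∈ K → q ∈ L := by
  obtain ⟨g, hg, hgf⟩ := hf.exists_continuousOn_inverse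
  refine ⟨g '' (Icc 0 1 ×ˢ K), (isCompact_Icc.prod hK).image_of_continuousOn
    (hg.mono (prod_mono_right (subset_univ K))), fun t ht q hq => ?_⟩
  exact ⟨(t, f (t, q)), ⟨ht, hq⟩, hgf t ht q⟩

end IsSmoothPath

section ContactSpeed

/-- The value of the contact form `α₀` on the velocity of the curve `γ` at time `t`. For
`γ = g(·, q)` this is the quantity whose sign decides whether the path `g` is positive. -/
def contactSpeed (γ : ℝ → E n) (t : ℝ) : ℝ := α₀ n (γ t) (deriv γ t)

lemma contactSpeed_of_hasDerivAt {γ : ℝ → E n} {t c : ℝ} {w : Fin n → ℝ}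
    (hγ : DifferentiableAt ℝ γ t) (hy : ∀ i, HasDerivAt (fun s => (γ s).2.1 i) (w i) t)
    (hz : HasDerivAt (fun s => (γ s).2.2) c t) :
    contactSpeed γ t = c + ∑ i, (γ t).1 i * w i := by
  have hy' : (deriv γ t).2.1 = w := hγ.hasFDerivAt.snd.fst.hasDerivAt.unique (hasDerivAt_pi.2 hy)
  have hz' : (deriv γ t).2.2 = c := hγ.hasFDerivAt.snd.snd.hasDerivAt.unique hz
  rw [contactSpeed, α₀, hy', hz']

lemma contactSpeed_eq_sum_deriv {γ : ℝ → E n} {t : ℝ} (hγ : DifferentiableAt ℝ γ t) :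
    contactSpeed γ t =
      deriv (fun s => (γ s).2.2) t + ∑ i, (γ t).1 i * deriv (fun s => (γ s).2.1 i) t := by
  refine contactSpeed_of_hasDerivAt hγ (fun i => ?_) ?_ <;>
    exact DifferentiableAt.hasDerivAt (by fun_prop)

lemma contactSpeed_comp_mul_left (γ : ℝ → E n) (N t : ℝ) :
    contactSpeed (fun s => γ (N * s)) t = N * contactSpeed γ (N * t) := by
  simp [contactSpeed, α₀, deriv_comp_mul_left, mul_add, Finset.mul_sum, mul_left_comm]

lemma contactSpeed_comp_of_contact {f : ℝ × E n → E n} {c : ℝ → E n} {t ρ : ℝ}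
    (hf : DifferentiableAt ℝ f (t, c t)) (hc : DifferentiableAt ℝ c t)
    (hcontact : ∀ v, α₀ n (f (t, c t)) (fderiv ℝ (fun q => f (t, q)) (c t) v) =
      ρ * α₀ n (c t) v) :
    contactSpeed (fun s => f (s, c s)) t =
      contactSpeed (fun s => f (s, c t)) t + ρ * contactSpeed c t := by
  have α₀_add : ∀ p v w, α₀ n p (v + w) = α₀ n p v + α₀ n p w := fun p v w => by
    simp only [α₀, Prod.snd_add, Prod.fst_add, Pi.add_apply, mul_add, Finset.sum_add_distrib]
    ring
  rw [contactSpeed, deriv_along_curve hf hc, α₀_add, hcontact]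
  rfl

lemma continuous_contactSpeed {f : ℝ × E n → E n} (hf : ContDiff ℝ 1 f) :
    Continuous fun z : ℝ × E n => contactSpeed (fun s => f (s, z.2)) z.1 := by
  have hderiv : Continuous fun z : ℝ × E n => deriv (fun s => f (s, z.2)) z.1 := by
    refine (ContDiff.fderiv_apply (n := 0) (m := 1) (k := fun _ => 1) ?_ contDiff_fst
      contDiff_const (by simp)).continuous
    change ContDiff ℝ 1 fun z : (ℝ × E n) × ℝ => f (z.2, z.1.2)
    fun_prop
  have hf' := hf.continuous
  unfold contactSpeed α₀
  fun_prop

end ContactSpeed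

section Heisenberg

/-- The Heisenberg group law on `ℝ^{2n+1}`, normalized so that left translations preserve `α₀`. -/
def heisenbergMul (p q : E n) : E n :=
  (p.1 + q.1, p.2.1 + q.2.1, p.2.2 + q.2.2 - ∑ i, p.1 i * q.2.1 i)

/-- The Heisenberg dilation by `s`, an endomorphism of the Heisenberg group that pulls `α₀` back to
`s² α₀`. -/
def heisenbergDilate (s : ℝ) (p : E n) : E n := (s • p.1, s • p.2.1, s ^ 2 * p.2.2)

/-- Right translation by `h` in the Heisenberg group, cut off by `r`: the point `q` is translated
by the dilation of `h` by `r q`. -/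
def cutoffTranslate (r : E n → ℝ) (h q : E n) : E n :=
  heisenbergMul q (heisenbergDilate (r q) h)

lemma contDiff_heisenbergMul {X : Type*} [NormedAddCommGroup X] [NormedSpace ℝ X]
    {k : WithTop ℕ∞} {p q : X → E n} (hp : ContDiff ℝ k p) (hq : ContDiff ℝ k q) :
    ContDiff ℝ k fun x => heisenbergMul (p x) (q x) := by
  unfold heisenbergMul
  fun_prop

lemma contDiff_heisenbergDilate {X : Type*} [NormedAddCommGroup X] [NormedSpace ℝ X]
    {k : WithTop ℕ∞} {r : X → ℝ} {p : X → E n} (hr : ContDiff ℝ k r) (hp : ContDiff ℝ k p) :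
    ContDiff ℝ k fun x => heisenbergDilate (r x) (p x) := by
  unfold heisenbergDilate
  fun_prop

lemma contactSpeed_heisenbergMul {γ : ℝ → E n} {t : ℝ} (p : E n) (hγ : DifferentiableAt ℝ γ t) :
    contactSpeed (fun s => heisenbergMul p (γ s)) t = contactSpeed γ t := by
  have hmul : DifferentiableAt ℝ (fun s => heisenbergMul p (γ s)) t :=
    ((contDiff_heisenbergMul contDiff_const contDiff_id).differentiable one_ne_zero _).comp t hγ
  have hy : ∀ i, HasDerivAt (fun s => (γ s).2.1 i) (deriv (fun s => (γ s).2.1 i) t) t :=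
    fun i => DifferentiableAt.hasDerivAt (by fun_prop)
  have hz : HasDerivAt (fun s => (γ s).2.2) (deriv (fun s => (γ s).2.2) t) t :=
    DifferentiableAt.hasDerivAt (by fun_prop)
  rw [contactSpeed_eq_sum_deriv hγ, contactSpeed_of_hasDerivAt hmul (fun i => (hy i).const_add _)
    ((hz.const_add _).sub (.fun_sum fun i _ => (hy i).const_mul (p.1 i)))]
  simp only [heisenbergMul, Pi.add_apply, add_mul, Finset.sum_add_distrib]
  ring

lemma contactSpeed_heisenbergDilate {γ : ℝ → E n} {t : ℝ} (a : ℝ) (hγ : DifferentiableAt ℝ γ t) :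
    contactSpeed (fun s => heisenbergDilate a (γ s)) t = a ^ 2 * contactSpeed γ t := by
  have hdil : DifferentiableAt ℝ (fun s => heisenbergDilate a (γ s)) t :=
    ((contDiff_heisenbergDilate contDiff_const contDiff_id).differentiable one_ne_zero _).comp t hγ
  have hy : ∀ i, HasDerivAt (fun s => (γ s).2.1 i) (deriv (fun s => (γ s).2.1 i) t) t :=
    fun i => DifferentiableAt.hasDerivAt (by fun_prop)
  have hz : HasDerivAt (fun s => (γ s).2.2) (deriv (fun s => (γ s).2.2) t) t :=
    DifferentiableAt.hasDerivAt (by fun_prop)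
  rw [contactSpeed_eq_sum_deriv hγ, contactSpeed_of_hasDerivAt hdil
    (fun i => (hy i).const_mul a) (hz.const_mul (a ^ 2)), mul_add, Finset.mul_sum]
  simp only [heisenbergDilate, Pi.smul_apply, smul_eq_mul]
  congr! 2
  ring

lemma contactSpeed_cutoffTranslate {γ : ℝ → E n} {t : ℝ} (r : E n → ℝ) (q : E n)
    (hγ : DifferentiableAt ℝ γ t) :
    contactSpeed (fun s => cutoffTranslate r (γ s) q) t = r q ^ 2 * contactSpeed γ t := by
  have hdil : DifferentiableAt ℝ (fun s => heisenbergDilate (r q) (γ s)) t :=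
    ((contDiff_heisenbergDilate contDiff_const contDiff_id).differentiable one_ne_zero _).comp t hγ
  exact (contactSpeed_heisenbergMul q hdil).trans (contactSpeed_heisenbergDilate (r q) hγ)

lemma cutoffTranslate_of_eq_zero {r : E n → ℝ} {q : E n} (h : E n) (hq : r q = 0) :
    cutoffTranslate r h q = q := by
  simp [cutoffTranslate, heisenbergMul, heisenbergDilate, hq]

lemma cutoffTranslate_zero (r : E n → ℝ) (q : E n) : cutoffTranslate r 0 q = q := by
  simp [cutoffTranslate, heisenbergMul, heisenbergDilate]

lemma contDiff_cutoffTranslate {X : Type*} [NormedAddCommGroup X] [NormedSpace ℝ X] {k : WithTop ℕ∞}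
    {r : X → E n → ℝ} {h q : X → E n} (hr : ContDiff ℝ k fun x => r x (q x)) (hh : ContDiff ℝ k h)
    (hq : ContDiff ℝ k q) : ContDiff ℝ k fun x => cutoffTranslate (r x) (h x) (q x) :=
  contDiff_heisenbergMul hq (contDiff_heisenbergDilate hr hh)

theorem exists_small_cutoffTranslate {b : E n → ℝ} {S : Set (E n)} (hb : ContDiff ℝ (⊤ : ℕ∞) b)
    (hbc : HasCompactSupport b) (hS : IsCompact S) :
    ∃ ε > 0, ∀ h ∈ S, IsDiffeo n (cutoffTranslate (fun p => ε * b p) h) ∧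
      ∀ q, ‖cutoffTranslate (fun p => ε * b p) h q - q‖ < 1 := by
  let D : (ℝ × E n) × E n → E n := fun z =>
    cutoffTranslate (fun p => z.1.1 * b p) z.1.2 z.2 - z.2
  have hD : ContDiff ℝ (⊤ : ℕ∞) D :=
    (contDiff_cutoffTranslate (by fun_prop) (by fun_prop) contDiff_snd).sub contDiff_snd
  have hsupp : ∀ x, ∀ q ∉ tsupport b, D (x, q) = 0 := fun x q hq =>
    sub_eq_zero.2 (cutoffTranslate_of_eq_zero _ (by simp [image_eq_zero_of_notMem_tsupport hq]))
  have h0 : ∀ h q, D ((0, h), q) = 0 := fun h q =>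
    sub_eq_zero.2 (cutoffTranslate_of_eq_zero h (zero_mul _))
  have hsmall : ∀ᶠ ε in 𝓝 (0 : ℝ), ∀ h ∈ S,
      LipschitzWith (1 / 2) (fun q => D ((ε, h), q)) ∧ ∀ q, ‖D ((ε, h), q)‖ < 1 :=
    hS.eventually_forall_of_forall_eventually fun h _ =>
      (eventually_lipschitzWith (hD.of_le (by simp)) hbc.isCompact hsupp (h0 h) (by norm_num)).and
        (eventually_forall_norm_lt hD.continuous hbc.isCompact hsupp (h0 h) one_pos)
  obtain ⟨ε, hε, hεpos⟩ := ((hsmall.filter_mono nhdsWithin_le_nhds).and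
    (self_mem_nhdsWithin : Ioi 0 ∈ 𝓝[>] (0 : ℝ))).exists
  refine ⟨ε, hεpos, fun h hh => ⟨⟨?_, ?_⟩, (hε h hh).2⟩⟩
  · exact contDiff_cutoffTranslate (by fun_prop) contDiff_const contDiff_id
  · have hDh : ContDiff ℝ (⊤ : ℕ∞) (fun q => D ((ε, h), q)) := by fun_prop
    simpa only [D, add_sub_cancel] using exists_contDiff_inverse_id_add hDh (by simp)
      (hε h hh).1 (by rw [← NNReal.coe_lt_coe]; norm_num)

end Heisenberg

section PositiveLoop

/-- A loop at the origin that is positive for `α₀`: its projection to the `(xᵢ, yᵢ)`-plane is a unit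
circle, and the `z`-coordinate makes its speed constant. -/
def positiveLoop (i : Fin n) (t : ℝ) : E n :=
  (Real.sin (2 * Real.pi * t) • Pi.single i 1, (1 - Real.cos (2 * Real.pi * t)) • Pi.single i 1,
    Real.sin (2 * (2 * Real.pi * t)) / 4)

lemma contDiff_positiveLoop (i : Fin n) {k : WithTop ℕ∞} : ContDiff ℝ k (positiveLoop i) := by
  unfold positiveLoop
  fun_prop

lemma positiveLoop_zero (i : Fin n) : positiveLoop i 0 = 0 := by
  simp [positiveLoop]

lemma positiveLoop_periodic (i : Fin n) : Periodic (positiveLoop i) 1 := by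
  intro t
  have h : 2 * Real.pi * (t + 1) = 2 * Real.pi * t + 2 * Real.pi := by ring
  simp only [positiveLoop, h, Real.sin_two_mul, Real.sin_add_two_pi, Real.cos_add_two_pi]

lemma contactSpeed_positiveLoop (i : Fin n) (t : ℝ) :
    contactSpeed (positiveLoop i) t = Real.pi := by
  have hθ : HasDerivAt (fun s => 2 * Real.pi * s) (2 * Real.pi) t := by
    simpa using (hasDerivAt_id t).const_mul (2 * Real.pi)
  rw [contactSpeed_of_hasDerivAt ((contDiff_positiveLoop i).differentiable one_ne_zero t)
    (fun j => (hθ.cos.const_sub 1).mul_const ((Pi.single i 1 : Fin n → ℝ) j))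
    ((hθ.const_mul 2).sin.div_const 4)]
  simp only [positiveLoop, Pi.smul_apply, smul_eq_mul, Pi.single_apply, mul_ite, mul_one, mul_zero,
    Finset.sum_ite_eq', Finset.mem_univ, if_true, Real.cos_two_mul]
  linear_combination 2 * Real.pi * Real.sin_sq_add_cos_sq (2 * Real.pi * t)

theorem exists_positive_loop (i : Fin n) {K : Set (E n)} (hK : IsCompact K) (C : ℝ) :
    ∃ φ : ℝ × E n → E n, IsSmoothPath n φ ∧ IsCompactlySupportedPath n φ ∧
      (∀ q, φ (0, q) = q) ∧ (∀ q, φ (1, q) = q) ∧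
      (∀ t q, 0 ≤ contactSpeed (fun s => φ (s, q)) t) ∧
      ∀ t q, φ (t, q) ∈ K → C ≤ contactSpeed (fun s => φ (s, q)) t := by
  obtain ⟨R, hR, hKR⟩ := hK.isBounded.subset_closedBall_lt 0 0
  let b : ContDiffBump (0 : E n) := ⟨R + 1, R + 2, by linarith, by linarith⟩
  have hγ := contDiff_positiveLoop i (k := (⊤ : ℕ∞))
  obtain ⟨ε, hε, hsmall⟩ := exists_small_cutoffTranslate b.contDiff b.hasCompactSupport
    ((positiveLoop_periodic i).compact_of_continuous one_ne_zero hγ.continuous)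
  obtain ⟨N, hN⟩ := exists_nat_ge (C / (ε ^ 2 * Real.pi))
  let φ : ℝ × E n → E n := fun z =>
    cutoffTranslate (fun p => ε * b p) (positiveLoop i (N * z.1)) z.2
  have hspeed : ∀ t q, contactSpeed (fun s => φ (s, q)) t = (ε * b q) ^ 2 * (N * Real.pi) := by
    intro t q
    have hγN : Differentiable ℝ fun s => positiveLoop i (N * s) :=
      (hγ.differentiable (by simp)).comp (differentiable_id.const_mul _)
    rw [contactSpeed_cutoffTranslate (fun p => ε * b p) q (hγN t), contactSpeed_comp_mul_left,
      contactSpeed_positiveLoop]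
  have hφ : ∀ t, IsDiffeo n (fun q => φ (t, q)) ∧ ∀ q, ‖φ (t, q) - q‖ < 1 :=
    fun t => hsmall _ (mem_range_self (N * t))
  refine ⟨φ, ⟨?_, fun t _ => (hφ t).1⟩,
    ⟨tsupport b, b.hasCompactSupport, fun t _ q hq => ?_⟩, fun q => ?_, fun q => ?_,
    fun t q => ?_, fun t q hq => ?_⟩
  · have hb : ContDiff ℝ (⊤ : ℕ∞) b := b.contDiff
    exact contDiff_cutoffTranslate (by fun_prop) (hγ.comp (by fun_prop)) contDiff_snd
  · exact cutoffTranslate_of_eq_zero _ (by simp [image_eq_zero_of_notMem_tsupport hq])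
  · simp only [φ, mul_zero, positiveLoop_zero, cutoffTranslate_zero]
  · simp only [φ, (positiveLoop_periodic i).nat_mul_eq, positiveLoop_zero, cutoffTranslate_zero]
  · rw [hspeed]
    positivity
  · have hbq : b q = 1 := by
      refine b.one_of_mem_closedBall (mem_closedBall_zero_iff.2 ?_)
      have hmove := (hφ t).2 q
      have hφq : ‖φ (t, q)‖ ≤ R := mem_closedBall_zero_iff.1 (hKR hq)
      change ‖q‖ ≤ R + 1
      linarith [norm_le_norm_add_norm_sub (φ (t, q)) q]
    rw [hspeed, hbq, mul_one]
    rw [div_le_iff₀ (by positivity)] at hN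
    linarith

end PositiveLoop

/-- A path of contactomorphisms of `(ℝ^{2n+1}, ξ_std)` that is positive outside
a compact set `K₁` can be modified inside a larger compact set `K₂` to an everywhere positive
path of diffeomorphisms with the same endpoints, coinciding with the original path outside
`K₂`. -/
theorem extension_of_positive_path (n : ℕ) (hn : 1 ≤ n) (f : ℝ × E n → E n)
    (hf : IsSmoothPath n f)
    (ρ : ℝ × E n → ℝ) (hρ : ContDiff ℝ (⊤ : ℕ∞) ρ)
    (hρpos : ∀ t ∈ Icc (0:ℝ) 1, ∀ p, 0 < ρ (t, p))
    (hcontacto : ∀ t ∈ Icc (0:ℝ) 1, ∀ p v,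
      α₀ n (f (t, p)) (fderiv ℝ (fun q => f (t, q)) p v) = ρ (t, p) * α₀ n p v)
    (K₁ : Set (E n)) (hK₁ : IsCompact K₁)
    (hpos : ∀ t ∈ Icc (0:ℝ) 1, ∀ q, f (t, q) ∉ K₁ →
      0 < α₀ n (f (t, q)) (pathDeriv n f t q)) :
    ∃ K₂ : Set (E n), IsCompact K₂ ∧ K₁ ⊆ K₂ ∧
      ∃ g : ℝ × E n → E n, IsSmoothPath n g ∧ IsPositivePath n g ∧
        (∀ p, g (0, p) = f (0, p)) ∧ (∀ p, g (1, p) = f (1, p)) ∧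
        ∀ t ∈ Icc (0:ℝ) 1, ∀ q ∉ K₂, g (t, q) = f (t, q) := by
  obtain ⟨L, hL, hfL⟩ := hf.exists_isCompact_preimage hK₁
  obtain ⟨C, hC⟩ := exists_forall_ge_pos_add_mul (isCompact_Icc.prod hL)
    (continuous_contactSpeed (hf.1.of_le (by simp))).continuousOn hρ.continuous.continuousOn
    fun z hz => hρpos z.1 hz.1 z.2
  obtain ⟨φ, hφ, ⟨K', hK', hφK'⟩, hφ0, hφ1, hφ_nonneg, hφ_large⟩ :=
    exists_positive_loop ⟨0, hn⟩ hL C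
  refine ⟨K₁ ∪ K', hK₁.union hK', subset_union_left, fun z => f (z.1, φ z), hf.comp hφ,
    fun t ht q => ?_, by simp [hφ0], by simp [hφ1], fun t ht q hq => ?_⟩
  · have hφq : Differentiable ℝ fun s => φ (s, q) :=
      (hφ.1.differentiable (by simp)).comp (by fun_prop)
    have hspeed := contactSpeed_comp_of_contact (hf.1.differentiable (by simp) _) (hφq t)
      (hcontacto t ht (φ (t, q)))
    refine lt_of_lt_of_eq ?_ hspeed.symm
    by_cases hmem : f (t, φ (t, q)) ∈ K₁
    · have hqL := hfL t ht _ hmem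
      exact hC (t, φ (t, q)) ⟨ht, hqL⟩ _ (hφ_large t q hqL)
    · exact add_pos_of_pos_of_nonneg (hpos t ht _ hmem)
        (mul_nonneg (hρpos t ht _).le (hφ_nonneg t q))
  · simp only [hφK' t ht q fun h => hq (.inr h)]
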